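/- Let $n \ge 1$ and $0 \le k \le n-1$. The number of labeled non-crossing forests on $n$ vertices placed on a circle, with exactly $k$ edges (hence $n-k$ tree components), where the components are labeled by disjoint sets $C_0,\ldots,C_{n-k-1}$ partitioning $\{0,1,\ldots,k-1\}$ with $|C_i| = |T_i| - 1$ for each component $T_i$, equals $\binom{n}{k+1} n^{k-1}$. -/

import Mathlib

/-- A non-crossing forest on `n` vertices placed on a circle (vertices `0,…,n-1` in cyclic
order, edges drawn as chords; chords `{a,c}` and `{b,d}` with `a < b < c < d` cross), with
exactly `k` edges, whose `n - k` tree components are labeled by pairwise disjoint sets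
covering `{0,…,k-1}`, the label of a component with `|T|` vertices having `|T| - 1`
elements. Crossing chords are required to lie in the same component. -/
structure LabeledNCForest (n k : ℕ) where
  G : SimpleGraph (Fin n)
  acyclic : G.IsAcyclic
  edges : G.edgeSet.ncard = k
  noncross : ∀ a b c d : Fin n, a < b → b < c → c < d →
    G.Adj a c → G.Adj b d → G.Reachable a b
  label : G.ConnectedComponent → Finset (Fin k)
  label_card : ∀ C, (label C).card + 1 =
    Nat.card {v : Fin n // G.connectedComponentMk v = C}
  label_partition : ∀ x : Fin k, ∃! C, x ∈ label C

/-- The divided Abel polynomial `x (x + k) ^ (k - 1) / k!`. -/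
def abelDiv : ℕ → ℚ → ℚ
  | 0, _ => 1
  | k + 1, x => x * (x + (k + 1)) ^ k / (k + 1).factorial

lemma abelDiv_mul_add (k : ℕ) (x : ℚ) :
    abelDiv k x * (x + k) = x * (x + k) ^ k / k.factorial := by
  cases k with
  | zero => simp [abelDiv]
  | succ k => simp only [abelDiv]; push_cast; ring

open Finset in
lemma sum_antidiagonal_abelDiv_neg (k : ℕ) (x : ℚ) :
    ∑ p ∈ antidiagonal (k + 1), (-(x + p.2)) ^ p.1 / p.1.factorial * abelDiv p.2 x = 0 := by
  have h := congrFun (fwdDiff_iter_pow_eq_zero_of_lt (R := ℚ) (Nat.lt_succ_self k)) x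
  rw [fwdDiff_iter_eq_sum_shift] at h
  rw [← Finset.Nat.sum_antidiagonal_swap,
    Finset.Nat.sum_antidiagonal_eq_sum_range_succ_mk]
  have h2 : ∀ l ∈ range (k + 1).succ,
      (-(x + (l : ℕ))) ^ (k + 1 - l) / (k + 1 - l).factorial * abelDiv l x =
      x / (k + 1).factorial * (((-1 : ℤ) ^ (k + 1 - l) * (k + 1).choose l) • (x + l • 1) ^ k) := by
    intro l hl
    have hl' : l ≤ k + 1 := by simpa [Nat.lt_succ_iff] using hl
    rw [zsmul_eq_mul]
    push_cast
    rw [Nat.cast_choose ℚ hl']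
    cases l with
    | zero =>
      simp only [abelDiv]
      rw [neg_pow]
      have : ((k + 1).factorial : ℚ) ≠ 0 := by positivity
      simp
      field_simp
      ring
    | succ l =>
      obtain ⟨m, hm⟩ := Nat.exists_eq_add_of_le hl'
      have h3 : k + 1 - (l + 1) = m := by omega
      have h4 : k = l + m := by omega
      rw [h3]
      subst h4
      simp only [abelDiv]
      rw [neg_pow]
      have : ((l + 1).factorial : ℚ) ≠ 0 := by positivity
      have : ((l + m + 1).factorial : ℚ) ≠ 0 := by positivity
      have : (m.factorial : ℚ) ≠ 0 := by positivity
      push_cast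
      field_simp
      simp
      ring
  simp only [Prod.fst_swap, Prod.snd_swap]
  rw [sum_congr rfl h2, ← mul_sum]
  simp only [Nat.succ_eq_add_one] at h ⊢
  rw [h]; simp

open Finset Polynomial in
/-- **Abel's binomial theorem**. -/
lemma sum_antidiagonal_abelDiv (k : ℕ) (x y : ℚ) :
    ∑ p ∈ antidiagonal k, (y + p.1) ^ p.1 / p.1.factorial * abelDiv p.2 x =
      (x + y + k) ^ k / k.factorial := by
  induction k generalizing y with
  | zero => simp [abelDiv]
  | succ k ih =>
    set P : ℚ[X] := ∑ p ∈ antidiagonal (k + 1),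
      (X + C (p.1 : ℚ)) ^ p.1 * C (abelDiv p.2 x / p.1.factorial) with hP
    set Q : ℚ[X] := (X + C (x + (k + 1))) ^ (k + 1) * C (1 / ((k + 1).factorial : ℚ)) with hQ
    have key : derivative P = derivative Q := by
      apply Polynomial.funext
      intro z
      have h := ih (z + 1)
      rw [hP, Finset.Nat.sum_antidiagonal_succ]
      simp only [derivative_sum, derivative_add, eval_add, eval_finsetSum, hQ]
      trans (x + (z + 1) + k) ^ k / k.factorial
      · rw [← h]
        simp only [pow_zero, one_mul, derivative_C, eval_zero, zero_add]
        refine sum_congr rfl fun p _ => ?_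
        simp [derivative_pow]
        rw [Nat.factorial_succ]
        have := Nat.factorial_ne_zero p.1
        push_cast
        field_simp
        ring
      · simp [derivative_pow]
        rw [Nat.factorial_succ]
        have := Nat.factorial_ne_zero k
        push_cast
        field_simp
        ring
    have h0 : derivative (P - Q) = 0 := by rw [derivative_sub, key, sub_self]
    have h1 := eq_C_of_derivative_eq_zero h0
    have e1 : ∀ z, P.eval z = ∑ p ∈ antidiagonal (k + 1),
        (z + p.1) ^ p.1 / p.1.factorial * abelDiv p.2 x := by
      intro z
      rw [hP, eval_finsetSum]
      refine sum_congr rfl fun p _ => ?_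
      simp
      ring
    have e2 : ∀ z, Q.eval z = (x + z + (k + 1)) ^ (k + 1) / (k + 1).factorial := by
      intro z
      simp [hQ]
      ring
    have e3 : P.eval (-(x + (k + 1))) = 0 := by
      rw [e1, ← sum_antidiagonal_abelDiv_neg k x]
      refine sum_congr rfl fun p hp => ?_
      have : (p.1 : ℚ) + p.2 = k + 1 := by exact_mod_cast mem_antidiagonal.1 hp
      rw [← this]; ring
    have e4 : Q.eval (-(x + (k + 1))) = 0 := by
      rw [e2]; simp
    have e5 : (P - Q).coeff 0 = 0 := by
      have := congrArg (eval (-(x + (k + 1)))) h1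
      rw [eval_sub, e3, e4, eval_C] at this
      linarith
    have := congrArg (eval y) h1
    rw [eval_sub, eval_C, e5, e1, e2] at this
    push_cast
    linarith

/-- The exponential weight `(m + 1) ^ (m - 1) / m!` of a tree on `m + 1` vertices. -/
def treeWeight (m : ℕ) : ℚ := abelDiv m 1

lemma treeWeight_mul (m : ℕ) : treeWeight m * (m + 1) = (1 + m) ^ m / m.factorial := by
  have := abelDiv_mul_add m 1
  rw [treeWeight, add_comm (m : ℚ), this]; ring

open Finset in
lemma sum_antidiagonal_treeWeight_mul (k : ℕ) (x p : ℚ) :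
    ∑ q ∈ antidiagonal k, treeWeight q.1 * (p + q.1 + 1) * abelDiv q.2 x =
      p * abelDiv k (x + 1) + (x + 1 + k) ^ k / k.factorial := by
  have h1 := sum_antidiagonal_abelDiv k x 1
  have h2 : ∑ q ∈ antidiagonal k, treeWeight q.1 * q.1 * abelDiv q.2 x =
      (x + 1 + k) ^ k / k.factorial - abelDiv k (x + 1) := by
    cases k with
    | zero => simp [abelDiv, treeWeight]
    | succ k =>
      rw [Finset.Nat.sum_antidiagonal_succ]
      have h := sum_antidiagonal_abelDiv k x 2
      have : ∀ q ∈ antidiagonal k, treeWeight (q.1 + 1) * ((q.1 + 1 : ℕ) : ℚ) * abelDiv q.2 x =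
          (2 + q.1) ^ q.1 / q.1.factorial * abelDiv q.2 x := by
        intro q _
        rw [treeWeight, abelDiv, Nat.factorial_succ]
        have := Nat.factorial_ne_zero q.1
        push_cast
        field_simp
        ring
      rw [sum_congr rfl this, h, show abelDiv (k + 1) (x + 1) =
        (x + 1) * (x + 1 + (k + 1)) ^ k / (k + 1).factorial from rfl, Nat.factorial_succ]
      have := Nat.factorial_ne_zero k
      push_cast
      field_simp
      ring
  have h3 : ∀ q ∈ antidiagonal k, treeWeight q.1 * (p + q.1 + 1) * abelDiv q.2 x =
      (p + 1) * ((1 + (q.1 : ℚ)) ^ q.1 / q.1.factorial * abelDiv q.2 x) -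
      p * (treeWeight q.1 * q.1 * abelDiv q.2 x) := by
    intro q _
    rw [← treeWeight_mul]; ring
  rw [sum_congr rfl h3, sum_sub_distrib, ← mul_sum, ← mul_sum, h1, h2]
  ring

open Finset in
/-- Weighted number of non-crossing partitions of `i + m` points in which every block meets the
first `i` points, a block of size `b` having weight `w b`. -/
def ncCount {R : Type*} [CommRing R] (w : ℕ → R) : ℕ → ℕ → R
  | 0, m => if m = 0 then 1 else 0
  | i + 1, m => ncCount w i (m + 1) + ∑ q ∈ range (m + 1), w (m - q + 1) * ncCount w i q

open Finset in
/-- Weighted number of ways to complete a non-crossing partition by `r` further points when `p`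
positions of already opened blocks are still to be filled. -/
def ncCompletion {R : Type*} [CommRing R] (w : ℕ → R) : ℕ → ℕ → R
  | 0, p => if p = 0 then 1 else 0
  | r + 1, p => (if p = 0 then 0 else ncCompletion w r (p - 1)) +
      ∑ q ∈ Ico p (r + 1), w (q - p + 1) * ncCompletion w r q

open Finset in
lemma sum_ncCount_mul_ncCompletion {R : Type*} [CommRing R] (w : ℕ → R) (i r : ℕ) :
    ∑ p ∈ range (r + 1), ncCount w i p * ncCompletion w r p = ncCompletion w (r + i) 0 := by
  induction i generalizing r with
  | zero =>
    rw [sum_eq_single 0]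
    · simp [ncCount]
    · intro p _ hp
      simp [ncCount, hp]
    · simp
  | succ i ih =>
    rw [show r + (i + 1) = r + 1 + i by ring, ← ih (r + 1)]
    simp only [ncCount, ncCompletion, add_mul, mul_add, sum_add_distrib]
    congr 1
    · rw [sum_range_succ' _ (r + 1)]
      simp
    · simp only [sum_mul, mul_sum]
      rw [sum_comm' (t' := range (r + 2)) (s' := fun q => Ico q (r + 1))]
      · refine sum_congr rfl fun p _ => sum_congr rfl fun q _ => by ring
      · intro p q
        simp only [mem_range, mem_Ico]
        omega

lemma ncCount_zero_right {R : Type*} [CommRing R] (w : ℕ → R) (n : ℕ) :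
    ncCount w n 0 = ncCompletion w n 0 := by
  have := sum_ncCount_mul_ncCompletion w n 0
  simpa [ncCompletion] using this

open Polynomial in
/-- Weight of a block of size `b` recording its trees and one block. -/
noncomputable def blockWeight (b : ℕ) : ℚ[X] := C (treeWeight (b - 1)) * X

lemma abelDiv_succ_zero (k : ℕ) : abelDiv (k + 1) 0 = 0 := by simp [abelDiv]

open Finset Polynomial in
lemma coeff_ncCompletion_blockWeight (r p j : ℕ) (hp : p ≤ r) :
    (ncCompletion blockWeight r p).coeff j =
      if j ≤ r - p then (p + 1) / (r + 1) * (r + 1).choose j * abelDiv (r - p - j) j else 0 := by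
  induction r generalizing p j with
  | zero =>
    obtain rfl : p = 0 := by omega
    rcases j with _ | j
    · simp [ncCompletion, abelDiv]
    · simp [ncCompletion, coeff_one]
  | succ r ih =>
    have hfirst : (if p = 0 then (0 : ℚ[X]) else ncCompletion blockWeight r (p - 1)).coeff j =
        if j ≤ r + 1 - p then p / (r + 1) * (r + 1).choose j * abelDiv (r + 1 - p - j) j
        else 0 := by
      rcases p with _ | p
      · simp
      · rw [if_neg (by omega), Nat.add_sub_cancel, ih _ _ (by omega)]
        simp
    rw [ncCompletion, coeff_add, hfirst, finsetSum_coeff]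
    rcases j with _ | j
    · have : ∀ q ∈ Ico p (r + 1),
          (blockWeight (q - p + 1) * ncCompletion blockWeight r q).coeff 0 = 0 := by
        intro q _
        simp [blockWeight]
      rw [sum_eq_zero this]
      rcases hk : r + 1 - p with _ | k
      · obtain rfl : p = r + 1 := by omega
        simp [abelDiv]
        field_simp
      · simp [abelDiv_succ_zero]
    · have h2 : ∀ q ∈ Ico p (r + 1),
          (blockWeight (q - p + 1) * ncCompletion blockWeight r q).coeff (j + 1) =
          if j ≤ r - q then treeWeight (q - p) * ((q + 1) / (r + 1) * (r + 1).choose j *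
            abelDiv (r - q - j) j) else 0 := by
        intro q hq
        rw [mem_Ico] at hq
        rw [blockWeight, mul_assoc, coeff_C_mul, coeff_X_mul, ih _ _ (by omega)]
        simp
      rw [sum_congr rfl h2]
      by_cases hj : j + 1 ≤ r + 1 - p
      · rw [if_pos hj, if_pos hj]
        obtain ⟨k, hk⟩ := Nat.exists_eq_add_of_le hj
        have hr : r = p + j + k := by omega
        have h3 : ∑ q ∈ Ico p (r + 1), (if j ≤ r - q then treeWeight (q - p) *
            ((q + 1) / (r + 1) * (r + 1).choose j * abelDiv (r - q - j) j) else 0) =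
            (r + 1).choose j / (r + 1) * ∑ q ∈ antidiagonal k,
              treeWeight q.1 * (p + q.1 + 1) * abelDiv q.2 j := by
          rw [Finset.Nat.sum_antidiagonal_eq_sum_range_succ_mk, mul_sum, ← sum_filter,
            show (Ico p (r + 1)).filter (fun q => j ≤ r - q) = Ico p (p + (k + 1)) by
              ext q; simp only [mem_filter, mem_Ico]; omega,
            sum_Ico_eq_sum_range, Nat.add_sub_cancel_left]
          refine sum_congr rfl fun m hm => ?_
          rw [mem_range] at hm
          rw [Nat.add_sub_cancel_left, show r - (p + m) - j = k - m by omega]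
          push_cast
          ring
        rw [h3, sum_antidiagonal_treeWeight_mul]
        have h4 := abelDiv_mul_add k ((j : ℚ) + 1)
        have e1 : ((r + 1 : ℕ) : ℚ) * (r + 1).choose j =
          ((r + 1).choose (j + 1)) * (j + 1) + (r + 1).choose j * j := by
          have := Nat.choose_succ_right_eq (r + 1) j
          have h5 : r + 1 - j + j = r + 1 := by omega
          have h6 : ((r + 1 - j : ℕ) : ℚ) = (r + 1 : ℕ) - j := by
            rw [Nat.cast_sub (by omega)]
          have h7 : ((r + 1).choose (j + 1) : ℚ) * (j + 1) =
              (r + 1).choose j * (r + 1 - j : ℕ) := by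
            exact_mod_cast this
          rw [h7, h6]; ring
        have e2 : ((r + 2).choose (j + 1) : ℚ) = (r + 1).choose j + (r + 1).choose (j + 1) := by
          exact_mod_cast Nat.choose_succ_succ (r + 1) j
        have e3 : (r + 1 - p - (j + 1)) = k := by omega
        rw [e3]
        have hr' : (r : ℚ) = p + j + k := by exact_mod_cast hr
        have h8 : ((j : ℚ) + 1 + k) ^ k / k.factorial =
            abelDiv k ((j : ℚ) + 1) * (j + 1 + k) / (j + 1) := by
          rw [h4]
          field_simp
        rw [h8, show r + 1 + 1 = r + 2 from rfl, e2]
        push_cast at e1 ⊢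
        generalize abelDiv k ((j : ℚ) + 1) = a
        generalize ((r + 1).choose j : ℚ) = c at *
        generalize ((r + 1).choose (j + 1) : ℚ) = d at *
        have hd : d = (r + 1 - j) * c / (j + 1) := by
          field_simp
          linarith
        rw [hd]
        have hk' : (k : ℚ) = r - p - j := by linarith
        rw [hk']
        field_simp
        ring
      · rw [if_neg hj, if_neg hj, sum_eq_zero, add_zero]
        intro q hq
        rw [mem_Ico] at hq
        rw [if_neg (by omega)]

open Polynomial in
lemma coeff_ncCount_blockWeight (n k : ℕ) (hn : 1 ≤ n) (hk : k ≤ n - 1) :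
    (k.factorial : ℚ) * (ncCount blockWeight n 0).coeff (n - k) =
      (n.choose (k + 1) : ℚ) * (n : ℚ) ^ ((k : ℤ) - 1) := by
  rw [ncCount_zero_right, coeff_ncCompletion_blockWeight _ _ _ (Nat.zero_le _), if_pos (by omega)]
  obtain ⟨j, rfl⟩ : ∃ j, n = j + 1 + k := ⟨n - 1 - k, by omega⟩
  rw [show j + 1 + k - 0 - (j + 1 + k - k) = k by omega, Nat.add_sub_cancel]
  have h4 := abelDiv_mul_add k ((j : ℚ) + 1)
  have h5 : abelDiv k ((j : ℚ) + 1) =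
      (j + 1) * (j + 1 + k) ^ k / k.factorial / (j + 1 + k) := by
    rw [← h4]
    field_simp
  have h6 : ((j + 1 + k + 1).choose (j + 1) : ℚ) * (j + 1) =
      (j + 1 + k + 1) * (j + 1 + k).choose (k + 1) := by
    have := Nat.add_one_mul_choose_eq (j + 1 + k) j
    rw [show (j + 1 + k).choose j = (j + 1 + k).choose (k + 1) from
      Nat.choose_symm_of_eq_add (by omega)] at this
    exact_mod_cast this.symm
  rw [zpow_sub_one₀ (by positivity), zpow_natCast]
  push_cast
  rw [h5]
  have : (k.factorial : ℚ) ≠ 0 := by positivity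
  field_simp
  linarith

/-- `P` is a non-crossing partition of the finite set `s`. -/
structure IsNCPartition {α : Type*} [LinearOrder α] (s : Finset α) (P : Finset (Finset α)) :
    Prop where
  nonempty : ∀ B ∈ P, B.Nonempty
  subset : ∀ B ∈ P, B ⊆ s
  cover : ∀ a ∈ s, ∃ B ∈ P, a ∈ B
  eq_of_mem : ∀ B ∈ P, ∀ C ∈ P, ∀ a ∈ B, a ∈ C → B = C
  eq_of_cross : ∀ B ∈ P, ∀ C ∈ P, ∀ a b c d, a < b → b < c → c < d →
    a ∈ B → c ∈ B → b ∈ C → d ∈ C → B = C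

open Finset Classical in
/-- The initial segments of a finite set. -/
noncomputable def initialSegments {α : Type*} [LinearOrder α] (v : Finset α) :
    Finset (Finset α) :=
  v.powerset.filter fun t => ∀ y ∈ v, ∀ z ∈ t, y < z → y ∈ t

open Finset in
lemma sum_initialSegments {α R : Type*} [LinearOrder α] [CommRing R] (v : Finset α) (f : ℕ → R) :
    ∑ t ∈ initialSegments v, f #t = ∑ c ∈ range (#v + 1), f c := by
  classical
  induction v using Finset.induction_on_max with
  | empty => simp [initialSegments]
  | insert x v hx ih =>
    have hxv : x ∉ v := fun h => lt_irrefl _ (hx x h)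
    have : initialSegments (insert x v) = insert (insert x v) (initialSegments v) := by
      ext t
      simp only [initialSegments, mem_filter, mem_powerset, mem_insert]
      constructor
      · rintro ⟨h1, h2⟩
        by_cases hxt : x ∈ t
        · left
          apply subset_antisymm h1
          intro y hy
          rcases mem_insert.1 hy with rfl | hy
          · exact hxt
          · exact h2 y (Or.inr hy) x hxt (hx y hy)
        · right
          refine ⟨fun y hy => ?_, fun y hy => h2 y (Or.inr hy)⟩
          exact (mem_insert.1 (h1 hy)).resolve_left fun h => hxt (h ▸ hy)
      · rintro (rfl | ⟨h1, h2⟩)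
        · exact ⟨subset_rfl, fun y hy _ _ _ => mem_insert.2 hy⟩
        · refine ⟨h1.trans (subset_insert _ _), fun y hy z hz hyz => ?_⟩
          rcases hy with rfl | hy
          · exact absurd (hx z (h1 hz)) hyz.not_gt
          · exact h2 y hy z hz hyz
    have hn : insert x v ∉ initialSegments v := by
      simp only [initialSegments, mem_filter, mem_powerset]
      exact fun h => hxv (h.1 (mem_insert_self _ _))
    rw [this, sum_insert hn, ih, card_insert_of_notMem hxv, sum_range_succ _ (#v + 1), add_comm]

open Finset Classical in
/-- The non-crossing partitions of `u ∪ v` all of whose blocks meet `u`. -/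
noncomputable def ncPartitions {α : Type*} [LinearOrder α] [Fintype α] (u v : Finset α) :
    Finset (Finset (Finset α)) :=
  univ.filter fun P => IsNCPartition (u ∪ v) P ∧ ∀ B ∈ P, ∃ a ∈ B, a ∈ u

lemma mem_ncPartitions {α : Type*} [LinearOrder α] [Fintype α] {u v : Finset α}
    {P : Finset (Finset α)} :
    P ∈ ncPartitions u v ↔ IsNCPartition (u ∪ v) P ∧ ∀ B ∈ P, ∃ a ∈ B, a ∈ u := by
  simp [ncPartitions]

open Finset in
lemma insert_mem_ncPartitions {α : Type*} [LinearOrder α] [Fintype α] {x : α} {u v t : Finset α}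
    (hx : ∀ a ∈ u, a < x) (hv : ∀ b ∈ v, x < b) (ht : t ∈ initialSegments v)
    {P : Finset (Finset α)} (hP : P ∈ ncPartitions u (v \ t)) :
    insert (insert x t) P ∈ ncPartitions (insert x u) v := by
  simp only [initialSegments, mem_filter, mem_powerset] at ht
  rw [mem_ncPartitions] at hP ⊢
  obtain ⟨h, hm⟩ := hP
  obtain ⟨ht1, ht2⟩ := ht
  have hdisj : ∀ B ∈ P, ∀ a ∈ B, a ∉ insert x t := by
    intro B hB a ha hat
    have := h.subset B hB ha
    grind
  have hbetween : ∀ B ∈ P, ∀ a ∈ insert x t, ∀ c ∈ insert x t, ∀ b ∈ B, a < b → b < c → False := by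
    intro B hB a ha c hc b hb hab hbc
    have := h.subset B hB hb
    grind
  refine ⟨⟨?_, ?_, ?_, ?_, ?_⟩, ?_⟩
  · intro B hB
    rcases mem_insert.1 hB with rfl | hB
    · exact insert_nonempty _ _
    · exact h.nonempty B hB
  · intro B hB
    rcases mem_insert.1 hB with rfl | hB
    · grind
    · have := h.subset B hB
      grind
  · intro a ha
    by_cases hat : a ∈ insert x t
    · exact ⟨_, mem_insert_self _ _, hat⟩
    · obtain ⟨B, hB, haB⟩ := h.cover a (by grind)
      exact ⟨B, mem_insert_of_mem hB, haB⟩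
  · intro B hB C hC a haB haC
    rcases mem_insert.1 hB with rfl | hB <;> rcases mem_insert.1 hC with rfl | hC
    · rfl
    · exact absurd haB (hdisj C hC a haC)
    · exact absurd haC (hdisj B hB a haB)
    · exact h.eq_of_mem B hB C hC a haB haC
  · intro B hB C hC a b c d hab hbc hcd ha hc hb hd
    rcases mem_insert.1 hB with rfl | hB <;> rcases mem_insert.1 hC with rfl | hC
    · rfl
    · exact (hbetween C hC a ha c hc b hb hab hbc).elim
    · exact (hbetween B hB b hb d hd c hc hbc hcd).elim
    · exact h.eq_of_cross B hB C hC a b c d hab hbc hcd ha hc hb hd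
  · intro B hB
    rcases mem_insert.1 hB with rfl | hB
    · exact ⟨x, mem_insert_self _ _, mem_insert_self _ _⟩
    · obtain ⟨a, ha, hau⟩ := hm B hB
      exact ⟨a, ha, mem_insert_of_mem hau⟩

open Finset in
lemma exists_eq_insert_of_mem_ncPartitions {α : Type*} [LinearOrder α] [Fintype α] {x : α}
    {u v : Finset α} (hx : ∀ a ∈ u, a < x) (hv : ∀ b ∈ v, x < b)
    {P : Finset (Finset α)} (hP : P ∈ ncPartitions (insert x u) v)
    {B : Finset α} (hB : B ∈ P) (hBu : ∀ a ∈ B, a ∉ u) :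
    ∃ t ∈ initialSegments v, ∃ Q ∈ ncPartitions u (v \ t), P = insert (insert x t) Q := by
  rw [mem_ncPartitions] at hP
  obtain ⟨h, hm⟩ := hP
  have hxB : x ∈ B := by
    obtain ⟨a, ha, hau⟩ := hm B hB
    rcases mem_insert.1 hau with rfl | hau
    · exact ha
    · exact absurd hau (hBu a ha)
  have hBv : ∀ a ∈ B, a ≠ x → a ∈ v := by
    intro a ha hax
    have := h.subset B hB ha
    have := hBu a ha
    grind
  have hother : ∀ C ∈ P, C ≠ B → ∃ a ∈ C, a ∈ u := by
    intro C hC hCB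
    obtain ⟨a, ha, hau⟩ := hm C hC
    rcases mem_insert.1 hau with rfl | hau
    · exact absurd (h.eq_of_mem C hC B hB a ha hxB) hCB
    · exact ⟨a, ha, hau⟩
  refine ⟨B.erase x, ?_, P.erase B, ?_, ?_⟩
  · simp only [initialSegments, mem_filter, mem_powerset]
    refine ⟨fun a ha => hBv a (mem_of_mem_erase ha) (ne_of_mem_erase ha), fun y hy z hz hyz => ?_⟩
    obtain ⟨C, hC, hyC⟩ := h.cover y (by grind)
    have hCB : C = B := by
      by_contra hne
      obtain ⟨a, ha, hau⟩ := hother C hC hne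
      exact hne (h.eq_of_cross C hC B hB a x y z (hx a hau) (hv y hy) hyz ha hyC hxB
        (mem_of_mem_erase hz))
    rw [mem_erase]
    exact ⟨(hv y hy).ne', hCB ▸ hyC⟩
  · rw [mem_ncPartitions]
    refine ⟨⟨?_, ?_, ?_, ?_, ?_⟩, ?_⟩
    · exact fun C hC => h.nonempty C (mem_of_mem_erase hC)
    · intro C hC a ha
      have h1 := h.subset C (mem_of_mem_erase hC) ha
      have h2 : a ∉ B := fun haB =>
        ne_of_mem_erase hC (h.eq_of_mem C (mem_of_mem_erase hC) B hB a ha haB)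
      grind
    · intro a ha
      obtain ⟨C, hC, haC⟩ := h.cover a (by grind)
      refine ⟨C, mem_erase.2 ⟨?_, hC⟩, haC⟩
      rintro rfl
      have := hBu a haC
      grind
    · exact fun C hC D hD => h.eq_of_mem C (mem_of_mem_erase hC) D (mem_of_mem_erase hD)
    · exact fun C hC D hD => h.eq_of_cross C (mem_of_mem_erase hC) D (mem_of_mem_erase hD)
    · exact fun C hC => hother C (mem_of_mem_erase hC) (ne_of_mem_erase hC)
  · rw [insert_erase hxB, insert_erase hB]

open Finset in
lemma sum_ncPartitions {α R : Type*} [LinearOrder α] [Fintype α] [CommRing R] (w : ℕ → R)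
    (u v : Finset α) (huv : ∀ a ∈ u, ∀ b ∈ v, a < b) :
    ∑ P ∈ ncPartitions u v, ∏ B ∈ P, w #B = ncCount w #u #v := by
  classical
  induction u using Finset.induction_on_max generalizing v with
  | empty =>
    rcases v.eq_empty_or_nonempty with rfl | ⟨y, hy⟩
    · have : ncPartitions (∅ : Finset α) ∅ = {∅} := by
        ext P
        rw [mem_ncPartitions, mem_singleton]
        constructor
        · rintro ⟨_, h⟩
          exact eq_empty_of_forall_notMem fun B hB => by simpa using h B hB
        · rintro rfl
          exact ⟨⟨by simp, by simp, by simp, by simp, by simp⟩, by simp⟩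
      simp [this, ncCount]
    · have : ncPartitions (∅ : Finset α) v = ∅ := by
        refine eq_empty_of_forall_notMem fun P hP => ?_
        rw [mem_ncPartitions] at hP
        obtain ⟨B, hB, -⟩ := hP.1.cover y (by simpa using hy)
        simpa using hP.2 B hB
      have hc : #v ≠ 0 := (card_pos.2 ⟨y, hy⟩).ne'
      simp [this, ncCount, hc]
  | insert x u hx ih =>
    have hxu : x ∉ u := fun h => lt_irrefl _ (hx x h)
    have hv : ∀ b ∈ v, x < b := huv x (mem_insert_self _ _)
    have hxv : x ∉ v := fun h => lt_irrefl _ (hv x h)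
    rw [card_insert_of_notMem hxu, ncCount,
      ← sum_filter_add_sum_filter_not _ (fun P => ∀ B ∈ P, ∃ a ∈ B, a ∈ u)]
    congr 1
    · rw [← card_insert_of_notMem hxv, ← ih (insert x v) (by grind)]
      refine sum_congr ?_ fun _ _ => rfl
      ext P
      rw [mem_filter, mem_ncPartitions, mem_ncPartitions,
        show insert x u ∪ v = u ∪ insert x v by grind]
      constructor
      · rintro ⟨⟨h1, -⟩, h2⟩
        exact ⟨h1, h2⟩
      · rintro ⟨h1, h2⟩
        refine ⟨⟨h1, fun B hB => ?_⟩, h2⟩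
        obtain ⟨a, ha, hau⟩ := h2 B hB
        exact ⟨a, ha, mem_insert_of_mem hau⟩
    · trans ∑ t ∈ initialSegments v, w (#t + 1) * ncCount w #u (#v - #t)
      · have hterm : ∀ t ∈ initialSegments v, w (#t + 1) * ncCount w #u (#v - #t) =
            ∑ Q ∈ ncPartitions u (v \ t), w (#t + 1) * ∏ B ∈ Q, w #B := by
          intro t ht
          have ht' : t ⊆ v := by
            simp only [initialSegments, mem_filter, mem_powerset] at ht
            exact ht.1
          rw [← mul_sum, ih (v \ t) (by grind), card_sdiff_of_subset ht']
        have hxt : ∀ t ∈ initialSegments v, x ∉ t := by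
          intro t ht hxt
          simp only [initialSegments, mem_filter, mem_powerset] at ht
          exact hxv (ht.1 hxt)
        have hxQ : ∀ t, ∀ Q ∈ ncPartitions u (v \ t), ∀ B ∈ Q, x ∉ B := by
          intro t Q hQ B hB hxB
          rw [mem_ncPartitions] at hQ
          have := hQ.1.subset B hB hxB
          grind
        rw [sum_congr rfl hterm, sum_sigma']
        symm
        refine sum_bij (fun p _ => insert (insert x p.1) p.2) ?_ ?_ ?_ ?_
        · rintro ⟨t, Q⟩ hp
          obtain ⟨ht, hQ⟩ := mem_sigma.1 hp
          refine mem_filter.2 ⟨insert_mem_ncPartitions hx hv ht hQ, fun hcon => ?_⟩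
          obtain ⟨a, ha, hau⟩ := hcon _ (mem_insert_self _ _)
          simp only [initialSegments, mem_filter, mem_powerset] at ht
          have := hx a hau
          grind
        · rintro ⟨t, Q⟩ hp ⟨t', Q'⟩ hp' heq
          obtain ⟨ht, hQ⟩ := mem_sigma.1 hp
          obtain ⟨ht', hQ'⟩ := mem_sigma.1 hp'
          simp only at heq ht ht' hQ hQ'
          have h1 : insert x t = insert x t' := by
            have : insert x t ∈ insert (insert x t') Q' := heq ▸ mem_insert_self _ _
            exact (mem_insert.1 this).resolve_right fun h =>
              hxQ _ _ hQ' _ h (mem_insert_self _ _)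
          have h2 : t = t' := by
            rw [← erase_insert (hxt t ht), h1, erase_insert (hxt t' ht')]
          subst h2
          have h3 : Q = Q' := by
            rw [← erase_insert (fun h => hxQ _ _ hQ _ h (mem_insert_self x t)), heq,
              erase_insert (fun h => hxQ _ _ hQ' _ h (mem_insert_self x t))]
          rw [h3]
        · intro P hP
          obtain ⟨hP, hn⟩ := mem_filter.1 hP
          push Not at hn
          obtain ⟨B, hB, hBu⟩ := hn
          obtain ⟨t, ht, Q, hQ, rfl⟩ := exists_eq_insert_of_mem_ncPartitions hx hv hP hB hBu
          exact ⟨⟨t, Q⟩, mem_sigma.2 ⟨ht, hQ⟩, rfl⟩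
        · rintro ⟨t, Q⟩ hp
          obtain ⟨ht, hQ⟩ := mem_sigma.1 hp
          rw [prod_insert (fun h => hxQ _ _ hQ _ h (mem_insert_self _ _)),
            card_insert_of_notMem (hxt t ht)]
      · rw [sum_initialSegments v fun c => w (c + 1) * ncCount w #u (#v - c),
          ← sum_range_reflect]
        refine sum_congr rfl fun q hq => ?_
        rw [mem_range] at hq
        rw [show #v + 1 - 1 - q = #v - q by omega, show #v - (#v - q) = q by omega]

namespace SimpleGraph

lemma reachable_sup_edge_iff {V : Type*} {H : SimpleGraph V} {x y a b : V} (hne : x ≠ y) :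
    (H ⊔ edge x y).Reachable a b ↔ H.Reachable a b ∨ (H.Reachable a x ∧ H.Reachable y b) ∨
      (H.Reachable a y ∧ H.Reachable x b) := by
  constructor
  · rintro ⟨p⟩
    induction p with
    | nil => exact Or.inl (Reachable.refl _)
    | cons h p ih =>
      rw [sup_adj, edge_adj] at h
      rcases h with h | ⟨⟨rfl, rfl⟩ | ⟨rfl, rfl⟩, -⟩
      · have h := h.reachable
        rcases ih with ih | ⟨h1, h2⟩ | ⟨h1, h2⟩
        · exact Or.inl (h.trans ih)
        · exact Or.inr (Or.inl ⟨h.trans h1, h2⟩)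
        · exact Or.inr (Or.inr ⟨h.trans h1, h2⟩)
      · rcases ih with ih | ⟨h1, h2⟩ | ⟨h1, h2⟩
        · exact Or.inr (Or.inl ⟨Reachable.refl _, ih⟩)
        · exact Or.inr (Or.inl ⟨Reachable.refl _, h2⟩)
        · exact Or.inl h2
      · rcases ih with ih | ⟨h1, h2⟩ | ⟨h1, h2⟩
        · exact Or.inr (Or.inr ⟨Reachable.refl _, ih⟩)
        · exact Or.inl h2
        · exact Or.inr (Or.inr ⟨Reachable.refl _, h2⟩)
  · have hadj : (H ⊔ edge x y).Reachable x y :=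
      Adj.reachable (by rw [sup_adj, edge_adj]; exact Or.inr ⟨Or.inl ⟨rfl, rfl⟩, hne⟩)
    have hmono : ∀ {c d}, H.Reachable c d → (H ⊔ edge x y).Reachable c d :=
      fun h => h.mono le_sup_left
    rintro (h | ⟨h1, h2⟩ | ⟨h1, h2⟩)
    · exact hmono h
    · exact (hmono h1).trans (hadj.trans (hmono h2))
    · exact (hmono h1).trans (hadj.symm.trans (hmono h2))

lemma deleteEdges_sup_edge {V : Type*} {G : SimpleGraph V} {x y : V} (h : G.Adj x y) :
    G.deleteEdges {s(x, y)} ⊔ edge x y = G := by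
  ext a b
  rw [sup_adj, edge_adj, deleteEdges_adj, Set.mem_singleton_iff, Sym2.eq_iff]
  constructor
  · rintro (h' | ⟨⟨rfl, rfl⟩ | ⟨rfl, rfl⟩, -⟩)
    · exact h'.1
    · exact h
    · exact h.symm
  · intro hab
    by_cases hc : a = x ∧ b = y ∨ a = y ∧ b = x
    · exact Or.inr ⟨by tauto, hab.ne⟩
    · exact Or.inl ⟨hab, hc⟩

lemma sup_edge_deleteEdges {V : Type*} {H : SimpleGraph V} {x y : V} (h : ¬ H.Adj x y) :
    (H ⊔ edge x y).deleteEdges {s(x, y)} = H := by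
  ext a b
  rw [deleteEdges_adj, sup_adj, edge_adj, Set.mem_singleton_iff, Sym2.eq_iff]
  constructor
  · rintro ⟨h1 | ⟨h1, -⟩, h2⟩
    · exact h1
    · exact absurd (by tauto) h2
  · intro hab
    refine ⟨Or.inl hab, ?_⟩
    rintro (⟨rfl, rfl⟩ | ⟨rfl, rfl⟩)
    · exact h hab
    · exact h hab.symm

/-- `R` contains exactly one vertex of each connected component of `G`. -/
def IsRootSet {V : Type*} (G : SimpleGraph V) (R : Finset V) : Prop :=
  ∀ v, ∃! r, r ∈ R ∧ G.Reachable v r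

lemma IsRootSet.eq_of_reachable {V : Type*} {G : SimpleGraph V} {R : Finset V}
    (h : G.IsRootSet R) {r s : V} (hr : r ∈ R) (hs : s ∈ R) (hrs : G.Reachable r s) : r = s :=
  (h r).unique ⟨hr, Reachable.refl r⟩ ⟨hs, hrs⟩

open Classical in
lemma isRootSet_insert_iff {V : Type*} {H : SimpleGraph V} {R : Finset V} {x y : V}
    (hxy : ¬ H.Reachable x y) :
    H.IsRootSet (insert x R) ∧ x ∉ R ↔
      (H ⊔ edge x y).IsRootSet R ∧ ∀ r ∈ R, ¬ H.Reachable x r := by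
  have hne : x ≠ y := fun h => hxy (h ▸ Reachable.refl x)
  constructor
  · rintro ⟨h, hxR⟩
    have hx : ∀ r ∈ R, ¬ H.Reachable x r := fun r hr hxr =>
      hxR (h.eq_of_reachable (Finset.mem_insert_self _ _) (Finset.mem_insert_of_mem hr) hxr ▸ hr)
    refine ⟨fun v => ?_, hx⟩
    have huniq : ∀ r ∈ R, ∀ s ∈ R, (H ⊔ edge x y).Reachable r s → r = s := by
      intro r hr s hs hrs
      rcases (reachable_sup_edge_iff hne).1 hrs with h1 | ⟨h1, -⟩ | ⟨-, h2⟩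
      · exact h.eq_of_reachable (Finset.mem_insert_of_mem hr) (Finset.mem_insert_of_mem hs) h1
      · exact absurd h1.symm (hx r hr)
      · exact absurd h2 (hx s hs)
    have hex : ∃ r ∈ R, (H ⊔ edge x y).Reachable v r := by
      obtain ⟨r, ⟨hr, hvr⟩, -⟩ := h v
      rcases Finset.mem_insert.1 hr with rfl | hr
      · obtain ⟨s, ⟨hs, hys⟩, -⟩ := h y
        rcases Finset.mem_insert.1 hs with rfl | hs
        · exact absurd hys.symm hxy
        · exact ⟨s, hs, (reachable_sup_edge_iff hne).2 (Or.inr (Or.inl ⟨hvr, hys⟩))⟩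
      · exact ⟨r, hr, hvr.mono le_sup_left⟩
    obtain ⟨r, hr, hvr⟩ := hex
    exact ⟨r, ⟨hr, hvr⟩, fun s hs => huniq s hs.1 r hr (hs.2.symm.trans hvr)⟩
  · rintro ⟨h, hx⟩
    refine ⟨fun v => ?_, fun hxR => hx x hxR (Reachable.refl x)⟩
    have huniq : ∀ r ∈ insert x R, ∀ s ∈ insert x R, H.Reachable r s → r = s := by
      intro r hr s hs hrs
      rcases Finset.mem_insert.1 hr with hr | hr <;> rcases Finset.mem_insert.1 hs with hs | hs
      · rw [hr, hs]
      · exact absurd (hr ▸ hrs) (hx s hs)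
      · exact absurd (hs ▸ hrs.symm) (hx r hr)
      · exact h.eq_of_reachable hr hs (hrs.mono le_sup_left)
    have hex : ∃ r ∈ insert x R, H.Reachable v r := by
      obtain ⟨r, ⟨hr, hvr⟩, -⟩ := h v
      rcases (reachable_sup_edge_iff hne).1 hvr with h1 | ⟨h1, -⟩ | ⟨-, h2⟩
      · exact ⟨r, Finset.mem_insert_of_mem hr, h1⟩
      · exact ⟨x, Finset.mem_insert_self _ _, h1⟩
      · exact absurd h2 (hx r hr)
    obtain ⟨r, hr, hvr⟩ := hex
    exact ⟨r, ⟨hr, hvr⟩, fun s hs => huniq s hs.1 r hr (hs.2.symm.trans hvr)⟩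

/-- The edge from `x` to `y` is the first edge of the path from `x` to its root. -/
def IsTowardRoot {V : Type*} (G : SimpleGraph V) (R : Finset V) (x y : V) : Prop :=
  G.Adj x y ∧ ∀ r ∈ R, ¬ (G.deleteEdges {s(x, y)}).Reachable x r

lemma IsAcyclic.not_reachable_deleteEdges {V : Type*} {G : SimpleGraph V} (hG : G.IsAcyclic)
    {x y : V} (h : G.Adj x y) : ¬ (G.deleteEdges {s(x, y)}).Reachable x y :=
  isBridge_iff.1 (isAcyclic_iff_forall_adj_isBridge.1 hG h)

lemma IsRootSet.isTowardRoot_or {V : Type*} {G : SimpleGraph V} {R : Finset V}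
    (hG : G.IsAcyclic) (hR : G.IsRootSet R) {x y : V} (h : G.Adj x y) :
    G.IsTowardRoot R x y ∨ G.IsTowardRoot R y x := by
  by_contra! hcon
  obtain ⟨h1, h2⟩ := hcon
  simp only [IsTowardRoot, h, h.symm, true_and, not_forall, not_not] at h1 h2
  obtain ⟨r, hr, hxr⟩ := h1
  obtain ⟨s, hs, hys⟩ := h2
  rw [Sym2.eq_swap] at hys
  have hle : G.deleteEdges {s(x, y)} ≤ G := deleteEdges_le _
  have hrs : r = s := hR.eq_of_reachable hr hs
    ((hxr.mono hle).symm.trans (h.reachable.trans (hys.mono hle)))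
  subst hrs
  exact hG.not_reachable_deleteEdges h (hxr.trans hys.symm)

lemma IsRootSet.not_isTowardRoot_swap {V : Type*} {G : SimpleGraph V} {R : Finset V}
    (hR : G.IsRootSet R) {x y : V} (hxy : G.IsTowardRoot R x y) :
    ¬ G.IsTowardRoot R y x := by
  intro hyx
  obtain ⟨h, hx⟩ := hxy
  have hy := hyx.2
  rw [Sym2.eq_swap] at hy
  obtain ⟨r, ⟨hr, hxr⟩, -⟩ := hR x
  rw [← deleteEdges_sup_edge h] at hxr
  rcases (reachable_sup_edge_iff h.ne).1 hxr with h1 | ⟨-, h1⟩ | ⟨-, h1⟩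
  · exact hx r hr h1
  · exact hy r hr h1
  · exact hx r hr h1

open Classical in
lemma IsTowardRoot.isRootSet_deleteEdges {V : Type*} {G : SimpleGraph V} {R : Finset V}
    (hG : G.IsAcyclic) (hR : G.IsRootSet R) {x y : V} (h : G.IsTowardRoot R x y) :
    (G.deleteEdges {s(x, y)}).IsRootSet (insert x R) ∧ x ∉ R := by
  rw [isRootSet_insert_iff (hG.not_reachable_deleteEdges h.1), deleteEdges_sup_edge h.1]
  exact ⟨hR, h.2⟩

open Classical in
lemma IsRootSet.ncard_edgeSet_add_card {V : Type*} [Fintype V] {G : SimpleGraph V}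
    {R : Finset V} (hG : G.IsAcyclic) (hR : G.IsRootSet R) :
    G.edgeSet.ncard + R.card = Fintype.card V := by
  induction hm : G.edgeSet.ncard generalizing G R with
  | zero =>
    have hbot : G = ⊥ := by
      rw [← edgeSet_eq_empty]
      exact (Set.ncard_eq_zero (Set.toFinite _)).1 hm
    have : R = Finset.univ := by
      refine Finset.eq_univ_of_forall fun v => ?_
      obtain ⟨r, ⟨hr, hvr⟩, -⟩ := hR v
      rw [hbot, reachable_bot] at hvr
      exact hvr ▸ hr
    simp [this]
  | succ m ih =>
    have key : ∀ x y, G.IsTowardRoot R x y → m + 1 + R.card = Fintype.card V := by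
      intro x y h
      obtain ⟨h1, h2⟩ := h.isRootSet_deleteEdges hG hR
      have := ih (hG.anti (deleteEdges_le _)) h1 (by
        rw [edgeSet_deleteEdges, Set.ncard_sdiff_singleton_of_mem (G.mem_edgeSet.2 h.1), hm]
        rfl)
      rw [Finset.card_insert_of_notMem h2] at this
      omega
    obtain ⟨e, he⟩ := (Set.ncard_pos (Set.toFinite _)).1
      (hm.symm ▸ Nat.succ_pos m : 0 < G.edgeSet.ncard)
    induction e using Sym2.ind with
    | _ x y =>
      rcases hR.isTowardRoot_or hG (G.mem_edgeSet.1 he) with h | h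
      · exact key _ _ h
      · exact key _ _ h

open Classical in
lemma IsRootSet.card_isTowardRoot {V : Type*} [Fintype V] {G : SimpleGraph V}
    {R : Finset V} (hG : G.IsAcyclic) (hR : G.IsRootSet R) :
    (Finset.univ.filter fun e : V × V => G.IsTowardRoot R e.1 e.2).card + R.card =
      Fintype.card V := by
  rw [← hR.ncard_edgeSet_add_card hG, Set.ncard_eq_toFinset_card']
  congr 1
  refine Finset.card_bij (fun e _ => s(e.1, e.2)) ?_ ?_ ?_
  · rintro ⟨x, y⟩ h
    simpa using (Finset.mem_filter.1 h).2.1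
  · rintro ⟨x, y⟩ h ⟨x', y'⟩ h' heq
    replace h := (Finset.mem_filter.1 h).2
    replace h' := (Finset.mem_filter.1 h').2
    rcases Sym2.eq_iff.1 heq with ⟨h1, h2⟩ | ⟨h1, h2⟩
    · simp only at h1 h2
      rw [h1, h2]
    · simp only at h h' h1 h2
      subst h1 h2
      exact absurd h' (hR.not_isTowardRoot_swap h)
  · intro e he
    induction e using Sym2.ind with
    | _ x y =>
      have hadj : G.Adj x y := by simpa using he
      rcases hR.isTowardRoot_or hG hadj with h | h
      · exact ⟨(x, y), by simpa using h, rfl⟩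
      · exact ⟨(y, x), by simpa using h, Sym2.eq_swap⟩

open Classical in
lemma IsRootSet.card_not_reachable {V : Type*} [Fintype V] {G : SimpleGraph V}
    {R : Finset V} (hR : G.IsRootSet R) :
    (Finset.univ.filter fun e : V × V => e.1 ∈ R ∧ ¬ G.Reachable e.1 e.2).card +
      Fintype.card V = R.card * Fintype.card V := by
  have h := Finset.card_filter_add_card_filter_not (s := R ×ˢ (Finset.univ : Finset V))
    (fun e : V × V => G.Reachable e.1 e.2)
  rw [Finset.card_product, Finset.card_univ] at h
  rw [← h, add_comm]
  congr 1
  · rw [← Finset.card_univ (α := V)]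
    symm
    refine Finset.card_bij (fun e _ => e.2) (fun _ _ => Finset.mem_univ _) ?_ ?_
    · rintro ⟨x, y⟩ he ⟨x', y'⟩ he' heq
      simp only [Finset.mem_filter, Finset.mem_product, Finset.mem_univ, and_true] at he he' heq
      subst heq
      rw [hR.eq_of_reachable he.1 he'.1 (he.2.trans he'.2.symm)]
    · intro v _
      obtain ⟨r, ⟨hr, hvr⟩, -⟩ := hR v
      exact ⟨(r, v), by simp [hr, hvr.symm], rfl⟩
  · congr 1
    ext e
    simp

open Classical in
/-- The rooted forests with `j` components, as pairs of a graph and its set of roots. -/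
noncomputable def rootedForests (V : Type*) [Fintype V] (j : ℕ) :
    Finset (SimpleGraph V × Finset V) :=
  Finset.univ.filter fun p => p.1.IsAcyclic ∧ p.1.IsRootSet p.2 ∧ p.2.card = j

lemma mem_rootedForests {V : Type*} [Fintype V] {j : ℕ} {p : SimpleGraph V × Finset V} :
    p ∈ rootedForests V j ↔ p.1.IsAcyclic ∧ p.1.IsRootSet p.2 ∧ p.2.card = j := by
  simp [rootedForests]

open Classical in
lemma card_rootedForests_succ (V : Type*) [Fintype V] (i : ℕ) :
    (rootedForests V (i + 1)).card * (Fintype.card V * i) =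
      (rootedForests V i).card * (Fintype.card V - i) := by
  have h1 : ((rootedForests V (i + 1)).sigma fun p =>
      Finset.univ.filter fun e : V × V => e.1 ∈ p.2 ∧ ¬ p.1.Reachable e.1 e.2).card =
      (rootedForests V (i + 1)).card * (Fintype.card V * i) := by
    rw [Finset.card_sigma, Finset.sum_const_nat]
    intro p hp
    obtain ⟨-, hR, hc⟩ := mem_rootedForests.1 hp
    have := hR.card_not_reachable
    rw [hc] at this
    linarith
  have h2 : ((rootedForests V i).sigma fun p =>
      Finset.univ.filter fun e : V × V => p.1.IsTowardRoot p.2 e.1 e.2).card =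
      (rootedForests V i).card * (Fintype.card V - i) := by
    rw [Finset.card_sigma, Finset.sum_const_nat]
    intro p hp
    obtain ⟨hG, hR, hc⟩ := mem_rootedForests.1 hp
    have := hR.card_isTowardRoot hG
    omega
  rw [← h1, ← h2]
  refine Finset.card_bij'
    (fun q _ => ⟨(q.1.1 ⊔ edge q.2.1 q.2.2, q.1.2.erase q.2.1), q.2⟩)
    (fun q _ => ⟨(q.1.1.deleteEdges {s(q.2.1, q.2.2)}, insert q.2.1 q.1.2), q.2⟩) ?_ ?_ ?_ ?_
  · rintro ⟨⟨H, R⟩, x, y⟩ hq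
    simp only [Finset.mem_sigma, mem_rootedForests, Finset.mem_filter, Finset.mem_univ,
      true_and] at hq ⊢
    obtain ⟨⟨hH, hR, hc⟩, hx, hxy⟩ := hq
    have hR' : H.IsRootSet (insert x (R.erase x)) ∧ x ∉ R.erase x := by
      rw [Finset.insert_erase hx]
      exact ⟨hR, Finset.notMem_erase _ _⟩
    have h3 := (isRootSet_insert_iff hxy).1 hR'
    refine ⟨⟨hH.sup_edge_of_not_reachable hxy, h3.1, by rw [Finset.card_erase_of_mem hx, hc]; rfl⟩,
      ?_, ?_⟩
    · rw [sup_adj, edge_adj]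
      exact Or.inr ⟨Or.inl ⟨rfl, rfl⟩, fun h => hxy (h ▸ Reachable.refl x)⟩
    · rw [sup_edge_deleteEdges fun h => hxy h.reachable]
      exact h3.2
  · rintro ⟨⟨G, R⟩, x, y⟩ hq
    simp only [Finset.mem_sigma, mem_rootedForests, Finset.mem_filter, Finset.mem_univ,
      true_and] at hq ⊢
    obtain ⟨⟨hG, hR, hc⟩, h⟩ := hq
    obtain ⟨h3, h4⟩ := h.isRootSet_deleteEdges hG hR
    exact ⟨⟨hG.anti (deleteEdges_le _), h3, by rw [Finset.card_insert_of_notMem h4, hc]⟩,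
      Finset.mem_insert_self _ _, hG.not_reachable_deleteEdges h.1⟩
  · rintro ⟨⟨H, R⟩, x, y⟩ hq
    simp only [Finset.mem_sigma, mem_rootedForests, Finset.mem_filter, Finset.mem_univ,
      true_and] at hq
    obtain ⟨-, hx, hxy⟩ := hq
    simp only
    rw [sup_edge_deleteEdges fun h => hxy h.reachable, Finset.insert_erase hx]
  · rintro ⟨⟨G, R⟩, x, y⟩ hq
    simp only [Finset.mem_sigma, mem_rootedForests, Finset.mem_filter, Finset.mem_univ,
      true_and] at hq
    obtain ⟨⟨hG, hR, hc⟩, h⟩ := hq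
    simp only
    rw [deleteEdges_sup_edge h.1,
      Finset.erase_insert (h.isRootSet_deleteEdges hG hR).2]

lemma card_rootedForests_card (V : Type*) [Fintype V] :
    (rootedForests V (Fintype.card V)).card = 1 := by
  rw [Finset.card_eq_one]
  refine ⟨(⊥, Finset.univ), ?_⟩
  ext ⟨G, R⟩
  rw [mem_rootedForests, Finset.mem_singleton, Prod.mk.injEq]
  constructor
  · rintro ⟨hG, hR, hc⟩
    have := hR.ncard_edgeSet_add_card hG
    simp only at this hc
    refine ⟨?_, Finset.eq_univ_of_card _ hc⟩
    rw [← edgeSet_eq_empty]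
    exact (Set.ncard_eq_zero (Set.toFinite _)).1 (by omega)
  · rintro ⟨rfl, rfl⟩
    refine ⟨isAcyclic_bot, fun v => ⟨v, ⟨Finset.mem_univ _, Reachable.refl _⟩, ?_⟩, rfl⟩
    rintro r ⟨-, hr⟩
    exact (reachable_bot.1 hr).symm

lemma card_rootedForests (V : Type*) [Fintype V] (m i : ℕ) (h : m + (i + 1) = Fintype.card V) :
    (rootedForests V (i + 1)).card = (m + i).choose i * Fintype.card V ^ m := by
  induction m generalizing i with
  | zero =>
    rw [show i + 1 = Fintype.card V by omega, card_rootedForests_card]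
    simp
  | succ m ih =>
    have h1 := card_rootedForests_succ V (i + 1)
    rw [ih (i + 1) (by omega), show Fintype.card V - (i + 1) = m + 1 by omega] at h1
    have h2 := Nat.choose_succ_right_eq (m + 1 + i) i
    rw [show m + 1 + i - i = m + 1 by omega] at h2
    apply Nat.eq_of_mul_eq_mul_right (Nat.succ_pos m : 0 < m + 1)
    rw [← h1, show m + (i + 1) = m + 1 + i by omega]
    calc _ = ((m + 1 + i).choose (i + 1) * (i + 1)) * Fintype.card V ^ (m + 1) := by ring
      _ = _ := by rw [h2, Nat.succ_eq_add_one]; ring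

lemma isRootSet_singleton_iff {V : Type*} {G : SimpleGraph V} {r : V} :
    G.IsRootSet {r} ↔ G.Connected := by
  constructor
  · intro h
    have hr : ∀ v, G.Reachable v r := by
      intro v
      obtain ⟨s, ⟨hs, hvs⟩, -⟩ := h v
      rwa [Finset.mem_singleton.1 hs] at hvs
    exact { preconnected := fun u v => (hr u).trans (hr v).symm, nonempty := ⟨r⟩ }
  · intro h v
    exact ⟨r, ⟨Finset.mem_singleton_self r, h.preconnected v r⟩,
      fun s hs => Finset.mem_singleton.1 hs.1⟩

/-- **Cayley's formula**. -/
theorem card_isTree_mul (V : Type*) [Fintype V] [Nonempty V] :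
    Nat.card {T : SimpleGraph V // T.IsTree} * Fintype.card V =
      Fintype.card V ^ (Fintype.card V - 1) := by
  classical
  have h := card_rootedForests V (Fintype.card V - 1) 0
    (Nat.sub_add_cancel (Fintype.card_pos (α := V)))
  rw [Nat.choose_zero_right, one_mul] at h
  rw [← h, Nat.card_eq_fintype_card, ← Fintype.card_prod, ← Finset.card_univ]
  refine Finset.card_bij (fun p _ => (p.1.1, {p.2})) ?_ ?_ ?_
  · rintro ⟨⟨T, hT⟩, r⟩ -
    rw [mem_rootedForests]
    exact ⟨hT.isAcyclic, isRootSet_singleton_iff.2 hT.connected, Finset.card_singleton _⟩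
  · rintro ⟨⟨T, hT⟩, r⟩ - ⟨⟨T', hT'⟩, r'⟩ - heq
    simpa using heq
  · rintro ⟨G, R⟩ hp
    obtain ⟨hG, hR, hc⟩ := mem_rootedForests.1 hp
    obtain ⟨r, rfl⟩ := Finset.card_eq_one.1 hc
    exact ⟨(⟨G, ⟨isRootSet_singleton_iff.1 hR, hG⟩⟩, r), Finset.mem_univ _, rfl⟩

end SimpleGraph

namespace SimpleGraph

variable {V ι : Type*} {f : V → ι}

lemma Reachable.apply_eq {G : SimpleGraph V} (hf : ∀ u v, G.Adj u v → f u = f v) {u v : V}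
    (h : G.Reachable u v) : f u = f v := by
  obtain ⟨p⟩ := h
  induction p with
  | nil => rfl
  | cons h p ih => exact (hf _ _ h).trans ih

lemma Walk.apply_eq_of_mem_support {G : SimpleGraph V} (hf : ∀ u v, G.Adj u v → f u = f v)
    {u v x : V} (p : G.Walk u v) (hx : x ∈ p.support) : f x = f u := by
  classical
  exact (Reachable.apply_eq hf ⟨p.takeUntil x hx⟩).symm

lemma isAcyclic_of_induce_fiber {G : SimpleGraph V} (hf : ∀ u v, G.Adj u v → f u = f v)
    (h : ∀ i, (G.induce {v | f v = i}).IsAcyclic) : G.IsAcyclic := by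
  intro u c hc
  have hs : ∀ x ∈ c.support, x ∈ {v | f v = f u} := fun x hx => c.apply_eq_of_mem_support hf hx
  refine h (f u) (c.induce _ hs) ?_
  rw [← Walk.isCycle_map_iff_of_injective (f := (Embedding.induce _).toHom)
    (Embedding.induce (G := G) {v | f v = f u}).injective, Walk.map_induce]
  exact hc

lemma induce_fiber_reachable {G : SimpleGraph V} (hf : ∀ u v, G.Adj u v → f u = f v) {i : ι}
    {u v : V} (hu : f u = i) (hv : f v = i) (h : G.Reachable u v) :
    (G.induce {v | f v = i}).Reachable ⟨u, hu⟩ ⟨v, hv⟩ := by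
  obtain ⟨p⟩ := h
  have hs : ∀ x ∈ p.support, x ∈ {v | f v = i} :=
    fun x hx => (p.apply_eq_of_mem_support hf hx).trans hu
  exact ⟨p.induce _ hs⟩

/-- The graph on `V` obtained by putting a graph on each fiber of `f : V → ι`. -/
def ofFibers (T : ∀ i, SimpleGraph {v // f v = i}) : SimpleGraph V where
  Adj u v := ∃ h : f u = f v, (T (f v)).Adj ⟨u, h⟩ ⟨v, rfl⟩
  symm := ⟨by
    rintro u v ⟨h, hadj⟩
    refine ⟨h.symm, ?_⟩
    have key : ∀ i (hu : f u = i) (hv : f v = i), (T i).Adj ⟨u, hu⟩ ⟨v, hv⟩ →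
        (T (f u)).Adj ⟨v, h.symm⟩ ⟨u, rfl⟩ := by
      rintro i rfl hv hadj
      exact hadj.symm
    exact key _ _ _ hadj⟩
  loopless := ⟨by
    rintro u ⟨h, hadj⟩
    exact hadj.ne rfl⟩

lemma ofFibers_induce (T : ∀ i, SimpleGraph {v // f v = i}) (i : ι) :
    (ofFibers T).induce {v | f v = i} = T i := by
  ext ⟨u, hu⟩ ⟨v, hv⟩
  rw [induce_adj]
  constructor
  · rintro ⟨h, hadj⟩
    obtain rfl := hv
    exact hadj
  · intro hadj
    obtain rfl := hv
    exact ⟨hu, hadj⟩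

lemma ofFibers_apply_eq (T : ∀ i, SimpleGraph {v // f v = i}) (u v : V)
    (h : (ofFibers T).Adj u v) : f u = f v := h.1

/-- A forest whose components are the fibers of a surjection is a choice of a tree on each
fiber. -/
noncomputable def forestEquivTrees (hf : Function.Surjective f) :
    {G : SimpleGraph V // G.IsAcyclic ∧ ∀ u v, G.Reachable u v ↔ f u = f v} ≃
      ∀ i, {T : SimpleGraph {v // f v = i} // T.IsTree} where
  toFun G i := ⟨G.1.induce {v | f v = i}, by
    have hadj : ∀ u v, G.1.Adj u v → f u = f v := fun u v h => (G.2.2 u v).1 h.reachable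
    obtain ⟨v, hv⟩ := hf i
    refine ⟨{ preconnected := ?_, nonempty := ⟨v, hv⟩ }, G.2.1.induce _⟩
    rintro ⟨u, hu⟩ ⟨v, hv⟩
    exact induce_fiber_reachable hadj hu hv ((G.2.2 u v).2 (hu.trans hv.symm))⟩
  invFun T := ⟨ofFibers fun i => (T i).1, by
    refine ⟨isAcyclic_of_induce_fiber (ofFibers_apply_eq _) fun i => ?_, fun u v => ⟨fun h =>
      h.apply_eq (ofFibers_apply_eq _), fun h => ?_⟩⟩
    · rw [ofFibers_induce]
      exact (T i).2.isAcyclic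
    · have h1 := (T (f v)).2.connected.preconnected ⟨u, h⟩ ⟨v, rfl⟩
      rw [← ofFibers_induce (fun i => (T i).1)] at h1
      exact h1.map (Embedding.induce _).toHom⟩
  left_inv := by
    rintro ⟨G, hG⟩
    ext u v
    constructor
    · rintro ⟨h, hadj⟩
      exact hadj
    · intro h
      exact ⟨(hG.2 u v).1 h.reachable, h⟩
  right_inv := by
    intro T
    funext i
    exact Subtype.ext (ofFibers_induce (fun i => (T i).1) i)

end SimpleGraph

lemma card_fiber_eq_mul_prod_factorial {α ι : Type*} [Fintype α] [DecidableEq α] [Fintype ι]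
    [DecidableEq ι] (c : ι → ℕ) (hc : ∑ i, c i = Fintype.card α) :
    Nat.card {f : α → ι // ∀ i, Nat.card {a // f a = i} = c i} * ∏ i, (c i).factorial =
      (Fintype.card α).factorial := by
  classical
  have h1 : Nat.card (Σ f : {f : α → ι // ∀ i, Nat.card {a // f a = i} = c i},
      {e : α ≃ Σ i, Fin (c i) // ∀ a, (e a).1 = f.1 a}) = (Fintype.card α).factorial := by
    have e0 : α ≃ Σ i, Fin (c i) := Fintype.equivOfCardEq (by simp [hc])
    rw [← Fintype.card_equiv e0, ← Nat.card_eq_fintype_card]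
    refine Nat.card_congr ⟨fun p => p.2.1, fun e => ⟨⟨fun a => (e a).1, fun i => ?_⟩, e,
      fun a => rfl⟩, ?_, fun e => rfl⟩
    · rw [Nat.card_congr (e.subtypeEquiv (p := fun a => (e a).1 = i) (q := fun x => x.1 = i)
        fun a => Iff.rfl), Nat.card_congr (Equiv.sigmaSubtype i), Nat.card_fin]
    · rintro ⟨⟨f, hf⟩, e, he⟩
      obtain rfl : (fun a => (e a).1) = f := funext he
      rfl
  have h2 : ∀ f : {f : α → ι // ∀ i, Nat.card {a // f a = i} = c i},
      Nat.card {e : α ≃ Σ i, Fin (c i) // ∀ a, (e a).1 = f.1 a} = ∏ i, (c i).factorial := by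
    rintro ⟨f, hf⟩
    obtain ⟨e0, he0⟩ : ∃ e0 : α ≃ Σ i, Fin (c i), ∀ a, (e0 a).1 = f a :=
      ⟨(Equiv.sigmaFiberEquiv f).symm.trans
        (Equiv.sigmaCongrRight fun i => Finite.equivFinOfCardEq (hf i)), fun a => rfl⟩
    have he0' : ∀ x, f (e0.symm x) = x.1 := fun x => by rw [← he0, Equiv.apply_symm_apply]
    have h3 : Nat.card {e : α ≃ Σ i, Fin (c i) // ∀ a, (e a).1 = f a} =
        Nat.card {g : Equiv.Perm α // f ∘ g = f} := by
      refine Nat.card_congr ⟨fun e => ⟨e.1.trans e0.symm, funext fun a => ?_⟩,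
        fun g => ⟨g.1.trans e0, fun a => ?_⟩, fun e => ?_, fun g => ?_⟩
      · simp [he0', e.2]
      · exact (he0 _).trans (congrFun g.2 a)
      · ext1; ext1 a; simp
      · ext1; ext1 a; simp
    rw [h3, Nat.card_eq_fintype_card, DomMulAct.stabilizer_card]
    refine Finset.prod_congr rfl fun i _ => ?_
    rw [← hf i, Nat.card_eq_fintype_card]
  rw [← h1, Nat.card_sigma, Finset.sum_congr rfl fun f _ => h2 f, Finset.sum_const,
    Finset.card_univ, Nat.card_eq_fintype_card, smul_eq_mul]

lemma SimpleGraph.Reachable.exists_adj_of_not {V : Type*} {G : SimpleGraph V} {u v : V}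
    (h : G.Reachable u v) (p : V → Prop) (hu : p u) (hv : ¬ p v) :
    ∃ x y, G.Reachable u x ∧ G.Adj x y ∧ p x ∧ ¬ p y := by
  obtain ⟨w⟩ := h
  induction w with
  | nil => exact absurd hu hv
  | @cons u u' v hadj w ih =>
    by_cases hp : p u'
    · obtain ⟨x, y, h1, h2⟩ := ih hp hv
      exact ⟨x, y, hadj.reachable.trans h1, h2⟩
    · exact ⟨u, u', Reachable.refl _, hadj, hu, hp⟩

/-- If crossing edges always lie in the same component, then the components do not cross. -/
lemma SimpleGraph.reachable_of_cross {V : Type*} [LinearOrder V] {G : SimpleGraph V}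
    (hG : ∀ a b c d : V, a < b → b < c → c < d → G.Adj a c → G.Adj b d → G.Reachable a b)
    {a b c d : V} (hab : a < b) (hbc : b < c) (hcd : c < d)
    (hac : G.Reachable a c) (hbd : G.Reachable b d) : G.Reachable a b := by
  by_contra hcon
  have key : ∀ x y, G.Reachable a x → G.Reachable b y → ¬ G.Reachable x y :=
    fun x y hx hy hxy => hcon (hx.trans (hxy.trans hy.symm))
  obtain ⟨s, t, hs, hst, ⟨has, hsc⟩, ht⟩ :=
    hbd.exists_adj_of_not (fun x => a < x ∧ x < c) ⟨hab, hbc⟩ fun h => lt_asymm h.2 hcd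
  have htb : G.Reachable b t := hs.trans hst.reachable
  have hta : t ≠ a := fun h => key a t (Reachable.refl a) htb (h ▸ Reachable.refl _)
  have htc : t ≠ c := fun h => key c t hac htb (h ▸ Reachable.refl _)
  have hcross : ∀ x y, G.Reachable a x → G.Adj x y →
      ¬ (s < x ∧ x < t ∧ (y < s ∨ t < y)) ∧ ¬ (t < x ∧ x < s ∧ (y < t ∨ s < y)) := by
    intro x y hx hxy
    have hy := hx.trans hxy.reachable
    refine ⟨?_, ?_⟩
    · rintro ⟨h1, h2, h3 | h3⟩
      · exact key y s hy hs (hG y s x t h3 h1 h2 hxy.symm hst)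
      · exact key x s hx hs (hG s x t y h1 h2 h3 hst hxy).symm
    · rintro ⟨h1, h2, h3 | h3⟩
      · exact key y t hy htb (hG y t x s h3 h1 h2 hxy.symm hst.symm)
      · exact key x t hx htb (hG t x s y h1 h2 h3 hst.symm hxy).symm
  have hne : ∀ y, G.Reachable a y → y ≠ s ∧ y ≠ t := fun y hy =>
    ⟨fun h => key y s hy hs (h ▸ Reachable.refl _), fun h => key y t hy htb (h ▸ Reachable.refl _)⟩
  by_cases hct : c < t
  · obtain ⟨x, y, hx, hxy, h1, h2⟩ := hac.symm.exists_adj_of_not (fun x => s < x ∧ x < t)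
      ⟨hsc, hct⟩ fun h => lt_asymm h.1 has
    have hx := hac.trans hx
    have := (hcross x y hx hxy).1
    have := hne y (hx.trans hxy.reachable)
    grind
  · have hta : t < a := by grind
    obtain ⟨x, y, hx, hxy, h1, h2⟩ := hac.exists_adj_of_not (fun x => t < x ∧ x < s)
      ⟨hta, has⟩ fun h => lt_asymm h.2 hsc
    have := (hcross x y hx hxy).2
    have := hne y (hx.trans hxy.reachable)
    grind

namespace IsNCPartition

variable {α : Type*} [LinearOrder α] [Fintype α] {P : Finset (Finset α)}

/-- The block of a non-crossing partition which contains a given element. -/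
noncomputable def block (hP : IsNCPartition Finset.univ P) (v : α) : P :=
  ⟨(hP.cover v (Finset.mem_univ v)).choose,
    (hP.cover v (Finset.mem_univ v)).choose_spec.1⟩

lemma block_eq_iff (hP : IsNCPartition Finset.univ P) {v : α} {i : P} :
    hP.block v = i ↔ v ∈ i.1 := by
  have h := (hP.cover v (Finset.mem_univ v)).choose_spec
  refine ⟨fun hi => hi ▸ h.2, fun hi => Subtype.ext (hP.eq_of_mem _ h.1 _ i.2 v h.2 hi)⟩

lemma block_surjective (hP : IsNCPartition Finset.univ P) : Function.Surjective hP.block := by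
  intro i
  obtain ⟨v, hv⟩ := hP.nonempty i.1 i.2
  exact ⟨v, hP.block_eq_iff.2 hv⟩

lemma card_block_eq (hP : IsNCPartition Finset.univ P) (i : P) :
    Nat.card {v // hP.block v = i} = i.1.card := by
  simp [hP.block_eq_iff]

open Finset in
lemma sum_card_sub_one (hP : IsNCPartition univ P) :
    ∑ i : P, (#i.1 - 1) + #P = Fintype.card α := by
  have h1 : ∑ i : P, #i.1 = Fintype.card α := by
    rw [← Nat.card_eq_fintype_card, ← Nat.card_congr (Equiv.sigmaFiberEquiv hP.block),
      Nat.card_sigma]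
    exact sum_congr rfl fun i _ => (hP.card_block_eq i).symm
  rw [← h1, ← Fintype.card_coe P, ← card_univ, card_eq_sum_ones, ← sum_add_distrib]
  exact sum_congr rfl fun i _ => Nat.sub_add_cancel (hP.nonempty i.1 i.2).card_pos

/-- The forests whose components are the blocks of a given partition. -/
abbrev Forest (hP : IsNCPartition Finset.univ P) : Type _ :=
  {G : SimpleGraph α // G.IsAcyclic ∧ ∀ u v, G.Reachable u v ↔ hP.block u = hP.block v}

/-- The ways of giving each block of `P` a set of labels of size one less than the block. -/
abbrev Labeling (P : Finset (Finset α)) (k : ℕ) : Type _ :=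
  {f : Fin k → P // ∀ i, Nat.card {a // f a = i} = i.1.card - 1}

lemma card_forest (hP : IsNCPartition Finset.univ P) :
    (Nat.card hP.Forest : ℚ) =
      ∏ i : P, treeWeight (i.1.card - 1) * ((i.1.card - 1).factorial : ℚ) := by
  rw [Nat.card_congr (SimpleGraph.forestEquivTrees hP.block_surjective), Nat.card_pi]
  push_cast
  refine Finset.prod_congr rfl fun i _ => ?_
  have hi := (hP.nonempty i.1 i.2).card_pos
  have hc : Fintype.card {v // hP.block v = i} = i.1.card := by
    rw [← hP.card_block_eq i, Nat.card_eq_fintype_card]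
  have : Nonempty {v // hP.block v = i} := Fintype.card_pos_iff.1 (hc ▸ hi)
  have h := SimpleGraph.card_isTree_mul {v // hP.block v = i}
  rw [hc] at h
  have h2 := treeWeight_mul (i.1.card - 1)
  obtain ⟨m, hm⟩ : ∃ m, i.1.card = m + 1 := ⟨_, (Nat.sub_add_cancel hi).symm⟩
  rw [hm, Nat.add_sub_cancel] at h h2 ⊢
  have h3 : (m.factorial : ℚ) ≠ 0 := by positivity
  have h4 : (m + 1 : ℚ) ≠ 0 := by positivity
  rw [eq_div_iff h3] at h2
  apply mul_right_cancel₀ h4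
  have h5 : (Nat.card {T : SimpleGraph {v // hP.block v = i} // T.IsTree} : ℚ) * (m + 1) =
      (m + 1) ^ m := by exact_mod_cast h
  rw [h5, add_comm (m : ℚ), ← h2]
  ring

open Polynomial in
lemma card_forest_mul_card_labeling (hP : IsNCPartition Finset.univ P) {k : ℕ}
    (hk : k ≤ Fintype.card α) :
    (Nat.card hP.Forest * Nat.card (Labeling P k) : ℚ) =
      k.factorial * (∏ B ∈ P, blockWeight B.card).coeff (Fintype.card α - k) := by
  classical
  have hcoeff : (∏ B ∈ P, blockWeight B.card).coeff (Fintype.card α - k) =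
      if Fintype.card α - k = P.card then ∏ i : P, treeWeight (i.1.card - 1) else 0 := by
    simp only [blockWeight]
    rw [Finset.prod_mul_distrib, Finset.prod_const, ← map_prod, coeff_C_mul, coeff_X_pow,
      mul_ite, mul_one, mul_zero, Finset.prod_coe_sort P fun B => treeWeight (B.card - 1)]
  rw [hcoeff]
  have hsum := hP.sum_card_sub_one
  split_ifs with hc
  · have h := card_fiber_eq_mul_prod_factorial (α := Fin k) (fun i : P => i.1.card - 1)
      (by rw [Fintype.card_fin]; omega)
    rw [Fintype.card_fin] at h
    rw [hP.card_forest, Finset.prod_mul_distrib, ← h]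
    push_cast
    ring
  · have : IsEmpty (Labeling P k) := by
      refine ⟨fun f => hc ?_⟩
      have h1 : ∑ i : P, (i.1.card - 1) = k := by
        rw [← Finset.sum_congr rfl fun i _ => f.2 i, ← Nat.card_sigma,
          Nat.card_congr (Equiv.sigmaFiberEquiv f.1), Nat.card_fin]
      omega
    simp

end IsNCPartition

namespace IsNCPartition

lemma ncard_edgeSet_add_card {α : Type*} [LinearOrder α] [Fintype α] {P : Finset (Finset α)}
    (hP : IsNCPartition Finset.univ P) (G : hP.Forest) :
    G.1.edgeSet.ncard + P.card = Fintype.card α := by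
  classical
  have hinv := Function.surjInv_eq hP.block_surjective
  have hR : G.1.IsRootSet (Finset.univ.image (Function.surjInv hP.block_surjective)) := by
    refine fun v => ⟨Function.surjInv hP.block_surjective (hP.block v), ⟨by simp, ?_⟩, ?_⟩
    · rw [G.2.2, hinv]
    · rintro r ⟨hr, hvr⟩
      obtain ⟨i, -, rfl⟩ := Finset.mem_image.1 hr
      rw [G.2.2, hinv] at hvr
      rw [hvr]
  rw [← hR.ncard_edgeSet_add_card G.2.1, Finset.card_image_of_injective _
    (Function.injective_surjInv _), Finset.card_univ, Fintype.card_coe]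

lemma card_edgeSet_of_labeling {α : Type*} [LinearOrder α] [Fintype α] {P : Finset (Finset α)}
    (hP : IsNCPartition Finset.univ P) {k : ℕ} (G : hP.Forest) (f : Labeling P k) :
    G.1.edgeSet.ncard = k := by
  have h1 : ∑ i : P, (i.1.card - 1) = k := by
    rw [← Finset.sum_congr rfl fun i _ => f.2 i, ← Nat.card_sigma,
      Nat.card_congr (Equiv.sigmaFiberEquiv f.1), Nat.card_fin]
  have := hP.sum_card_sub_one
  have := hP.ncard_edgeSet_add_card G
  omega

/-- The block of the vertices of a component. -/
noncomputable def componentBlock {α : Type*} [LinearOrder α] [Fintype α] {P : Finset (Finset α)}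
    (hP : IsNCPartition Finset.univ P) (G : hP.Forest) : G.1.ConnectedComponent → P :=
  Quot.lift hP.block fun u v h => (G.2.2 u v).1 h

lemma componentBlock_bijective {α : Type*} [LinearOrder α] [Fintype α] {P : Finset (Finset α)}
    (hP : IsNCPartition Finset.univ P) (G : hP.Forest) :
    Function.Bijective (hP.componentBlock G) := by
  constructor
  · intro C D h
    induction C using SimpleGraph.ConnectedComponent.ind with
    | _ u =>
      induction D using SimpleGraph.ConnectedComponent.ind with
      | _ v => exact SimpleGraph.ConnectedComponent.eq.2 ((G.2.2 u v).2 h)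
  · intro i
    obtain ⟨v, rfl⟩ := hP.block_surjective i
    exact ⟨G.1.connectedComponentMk v, rfl⟩

lemma card_connectedComponentMk_eq {α : Type*} [LinearOrder α] [Fintype α]
    {P : Finset (Finset α)} (hP : IsNCPartition Finset.univ P) (G : hP.Forest)
    (C : G.1.ConnectedComponent) :
    Nat.card {v // G.1.connectedComponentMk v = C} = (hP.componentBlock G C).1.card := by
  rw [← hP.card_block_eq]
  exact Nat.card_congr (Equiv.subtypeEquivRight fun v =>
    ((hP.componentBlock_bijective G).1.eq_iff
      (a := G.1.connectedComponentMk v)).symm)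

lemma ext_block {α : Type*} [LinearOrder α] [Fintype α] {P Q : Finset (Finset α)}
    (hP : IsNCPartition Finset.univ P) (hQ : IsNCPartition Finset.univ Q)
    (h : ∀ u v, hP.block u = hP.block v ↔ hQ.block u = hQ.block v) : P = Q := by
  have key : ∀ {P Q : Finset (Finset α)} (hP : IsNCPartition Finset.univ P)
      (hQ : IsNCPartition Finset.univ Q)
      (_ : ∀ u v, hP.block u = hP.block v ↔ hQ.block u = hQ.block v), P ⊆ Q := by
    intro P Q hP hQ h B hB
    obtain ⟨v, hv⟩ := hP.block_surjective ⟨B, hB⟩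
    have : B = (hQ.block v).1 := by
      ext u
      rw [← hQ.block_eq_iff, ← h, hv, hP.block_eq_iff]
    exact this ▸ (hQ.block v).2
  exact (key hP hQ h).antisymm (key hQ hP fun u v => (h u v).symm)

end IsNCPartition

namespace SimpleGraph

open Classical in
/-- The vertex sets of the components of a graph. -/
noncomputable def componentSets {α : Type*} [Fintype α] (G : SimpleGraph α) :
    Finset (Finset α) :=
  Finset.univ.image fun v => Finset.univ.filter fun u => G.Reachable u v

lemma mem_componentSets {α : Type*} [Fintype α] {G : SimpleGraph α} {B : Finset α} :
    B ∈ G.componentSets ↔ ∃ v, ∀ u, u ∈ B ↔ G.Reachable u v := by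
  simp [componentSets, Finset.ext_iff, iff_comm]

lemma isNCPartition_componentSets {α : Type*} [LinearOrder α] [Fintype α] {G : SimpleGraph α}
    (hG : ∀ a b c d : α, a < b → b < c → c < d → G.Adj a c → G.Adj b d → G.Reachable a b) :
    IsNCPartition Finset.univ G.componentSets := by
  have heq : ∀ B ∈ G.componentSets, ∀ C ∈ G.componentSets, ∀ a ∈ B, ∀ b ∈ C,
      G.Reachable a b → B = C := by
    intro B hB C hC a ha b hb hab
    obtain ⟨v, hv⟩ := mem_componentSets.1 hB
    obtain ⟨w, hw⟩ := mem_componentSets.1 hC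
    rw [hv] at ha
    rw [hw] at hb
    ext u
    rw [hv, hw]
    have hvw : G.Reachable v w := ha.symm.trans (hab.trans hb)
    exact ⟨fun h => h.trans hvw, fun h => h.trans hvw.symm⟩
  have hreach : ∀ B ∈ G.componentSets, ∀ a ∈ B, ∀ b ∈ B, G.Reachable a b := by
    intro B hB a ha b hb
    obtain ⟨v, hv⟩ := mem_componentSets.1 hB
    exact ((hv a).1 ha).trans ((hv b).1 hb).symm
  refine ⟨fun B hB => ?_, fun B _ => Finset.subset_univ B, fun a _ => ?_,
    fun B hB C hC a ha ha' => heq B hB C hC a ha a ha' (Reachable.refl a), ?_⟩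
  · obtain ⟨v, hv⟩ := mem_componentSets.1 hB
    exact ⟨v, (hv v).2 (Reachable.refl v)⟩
  · classical
    exact ⟨Finset.univ.filter fun u => G.Reachable u a, mem_componentSets.2 ⟨a, by simp⟩,
      by simp⟩
  · intro B hB C hC a b c d hab hbc hcd ha hc hb hd
    exact heq B hB C hC a ha b hb
      (reachable_of_cross hG hab hbc hcd (hreach B hB a ha c hc) (hreach C hC b hb d hd))

lemma block_componentSets_eq_iff {α : Type*} [LinearOrder α] [Fintype α] {G : SimpleGraph α}
    (h : IsNCPartition Finset.univ G.componentSets) (u v : α) :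
    G.Reachable u v ↔ h.block u = h.block v := by
  rw [h.block_eq_iff]
  obtain ⟨w, hw⟩ := mem_componentSets.1 (h.block v).2
  have hv := (hw v).1 (h.block_eq_iff.1 rfl)
  rw [hw]
  exact ⟨fun huv => huv.trans hv, fun huw => huw.trans hv.symm⟩

end SimpleGraph

/-- The labeled non-crossing forest given by its partition into components, the forest, and the
block of each label. -/
noncomputable def LabeledNCForest.ofPartition {n k : ℕ} {P : Finset (Finset (Fin n))}
    (hP : IsNCPartition Finset.univ P) (G : hP.Forest) (f : IsNCPartition.Labeling P k) :
    LabeledNCForest n k where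
  G := G.1
  acyclic := G.2.1
  edges := hP.card_edgeSet_of_labeling G f
  noncross a b c d hab hbc hcd hac hbd := by
    have h1 := hP.block_eq_iff.1 ((G.2.2 a c).1 hac.reachable)
    have h2 := hP.block_eq_iff.1 ((G.2.2 b d).1 hbd.reachable)
    rw [G.2.2]
    have h3 : hP.block c = hP.block d := Subtype.ext
      (hP.eq_of_cross _ (hP.block c).2 _ (hP.block d).2 a b c d hab hbc hcd h1
        (hP.block_eq_iff.1 rfl) h2 (hP.block_eq_iff.1 rfl))
    rw [hP.block_eq_iff.2 h1, h3, hP.block_eq_iff.2 h2]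
  label C := Finset.univ.filter fun x => f.1 x = hP.componentBlock G C
  label_card C := by
    have hpos := (hP.nonempty _ (hP.componentBlock G C).2).card_pos
    rw [hP.card_connectedComponentMk_eq, ← Fintype.card_subtype, ← Nat.card_eq_fintype_card,
      f.2]
    exact Nat.sub_add_cancel hpos
  label_partition x := by
    obtain ⟨C, hC, huniq⟩ := (hP.componentBlock_bijective G).existsUnique (f.1 x)
    exact ⟨C, by simp [hC], fun D hD => huniq D (by simpa [eq_comm] using hD)⟩

lemma LabeledNCForest.bijective_ofPartition (n k : ℕ) :
    Function.Bijective fun p : Σ P : {P : Finset (Finset (Fin n)) //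
      IsNCPartition Finset.univ P}, P.2.Forest × IsNCPartition.Labeling P.1 k =>
        LabeledNCForest.ofPartition p.1.2 p.2.1 p.2.2 := by
  constructor
  · rintro ⟨⟨P, hP⟩, ⟨G, hG⟩, f⟩ ⟨⟨Q, hQ⟩, ⟨H, hH⟩, g⟩ h
    simp only [ofPartition, LabeledNCForest.mk.injEq] at h
    obtain ⟨rfl, h⟩ := h
    obtain rfl := hP.ext_block hQ fun u v => (hG.2 u v).symm.trans (hH.2 u v)
    have : f = g := by
      ext1
      funext x
      obtain ⟨C, hC⟩ := (hP.componentBlock_bijective ⟨G, hG⟩).2 (f.1 x)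
      have h1 := congrFun (eq_of_heq h) C
      have h2 : x ∈ Finset.univ.filter fun x => g.1 x = hP.componentBlock ⟨G, hG⟩ C :=
        h1 ▸ by simp [hC]
      rw [← hC]
      simpa [eq_comm] using h2
    rw [this]
  · intro L
    have hP := SimpleGraph.isNCPartition_componentSets L.noncross
    choose C hC huniq using L.label_partition
    let G : hP.Forest := ⟨L.G, L.acyclic, SimpleGraph.block_componentSets_eq_iff hP⟩
    have hlabel : ∀ D x, hP.componentBlock G (C x) = hP.componentBlock G D ↔ x ∈ L.label D := by
      intro D x
      rw [(hP.componentBlock_bijective G).1.eq_iff]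
      exact ⟨fun h => h ▸ hC x, fun h => (huniq x D h).symm⟩
    refine ⟨⟨⟨_, hP⟩, G, fun x => hP.componentBlock G (C x), fun i => ?_⟩, ?_⟩
    · obtain ⟨D, rfl⟩ := (hP.componentBlock_bijective G).2 i
      rw [← hP.card_connectedComponentMk_eq, ← L.label_card D, Nat.add_sub_cancel,
        Nat.card_congr (Equiv.subtypeEquivRight fun x => hlabel D x)]
      simp
    · obtain ⟨H, _, _, _, label, _, _⟩ := L
      simp only [ofPartition, LabeledNCForest.mk.injEq]
      refine ⟨rfl, heq_of_eq (funext fun D => ?_)⟩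
      ext x
      simpa using hlabel D x

/-- The number of labeled non-crossing forests on `n` circularly arranged vertices with
exactly `k` edges equals `(n choose (k+1)) * n^(k-1)` for `1 ≤ n` and `0 ≤ k ≤ n-1`. -/
theorem stmt_2 (n k : ℕ) (hn : 1 ≤ n) (hk : k ≤ n - 1) :
    (Nat.card (LabeledNCForest n k) : ℚ) =
      (n.choose (k + 1) : ℚ) * (n : ℚ) ^ ((k : ℤ) - 1) := by
  classical
  rw [← Nat.card_congr (Equiv.ofBijective _ (LabeledNCForest.bijective_ofPartition n k)),
    Nat.card_sigma, ← coeff_ncCount_blockWeight n k hn hk]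
  have h := sum_ncPartitions (α := Fin n) blockWeight Finset.univ ∅ (by simp)
  rw [Finset.card_fin, Finset.card_empty] at h
  rw [← h, Polynomial.finsetSum_coeff, Finset.mul_sum, Nat.cast_sum]
  have hmem : ∀ P : Finset (Finset (Fin n)),
      P ∈ ncPartitions Finset.univ ∅ ↔ IsNCPartition Finset.univ P := by
    intro P
    rw [mem_ncPartitions, Finset.union_empty]
    exact ⟨fun h => h.1, fun h => ⟨h, fun B hB =>
      (h.nonempty B hB).imp fun a ha => ⟨ha, Finset.mem_univ a⟩⟩⟩
  rw [Finset.sum_subtype _ hmem]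
  refine Finset.sum_congr rfl fun P _ => ?_
  have := P.2.card_forest_mul_card_labeling (k := k) (by rw [Fintype.card_fin]; omega)
  rw [Fintype.card_fin] at this
  rw [Nat.card_prod, Nat.cast_mul, this]
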